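/- arXiv:1911.07750 — 2 statements merged into one kernel-verified Lean document; each statement's English description precedes it below -/
import Mathlib

section
/- Soundness of Mc_P on original atoms (Lemma 2): for every iteration i ∈ ℕ, every atom a ∈ A (a non-magic atom of the original program), and every total choice C ⊆ F, if C ∈ τ_a^i then C ∪ R ⊨ a (entailment in the original program P). -/
/-!
A rule of the magic program whose head is an original atom `a` is a rule `(a, B)` of `P`
with one extra magic atom in its body. Discarding that atom only weakens the body, so the
(possibly too generous) formulas assigned to magic atoms cannot harm soundness: by induction
on `i`, every `C ∈ τ_a^i` satisfies `a ∈ T_{C∪R}^i(∅)`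
(`mem_step_iterate_of_mem_Mc_iterate`). Keeping the same index `i` on both sides means that
no monotonicity of `T_{C∪R}` is needed to collect the derivations of the body atoms.
-/

open Classical

/-- A ground definite program `P = (A, F, R)`: facts `F ⊆ A` and a finite set of rules,
each rule being a pair `(h, B)` with head `h ∈ A \ F` and body `B` a finite nonempty
subset of `A`. -/
structure GroundProgram (A : Type) where
  F : Set A
  R : Finset (A × Finset A)
  head_not_fact : ∀ r ∈ R, r.1 ∉ F
  body_nonempty : ∀ r ∈ R, r.2.Nonempty

variable {A : Type}

/-- The immediate consequence operator `T_{C∪R}`. -/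
def step (P : GroundProgram A) (C : Set A) (I : Set A) : Set A :=
  C ∪ {h | ∃ B : Finset A, (h, B) ∈ P.R ∧ ∀ b ∈ B, b ∈ I}

/-- Entailment `C ∪ R ⊨ a`: `a` belongs to `⋃ k, T_{C∪R}^k(∅)`. -/
def entails (P : GroundProgram A) (C : Set A) (a : A) : Prop :=
  a ∈ ⋃ k : ℕ, (step P C)^[k] ∅

/-- The `Tc_P` operator on parameterized interpretations (formulas represented
semantically by their sets of models, which are sets of total choices `C ⊆ F`). -/
noncomputable def Tc (P : GroundProgram A) (I : A → Set (Set A)) : A → Set (Set A) :=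
  fun a =>
    if a ∈ P.F then {C | C ⊆ P.F ∧ a ∈ C}
    else {C | ∃ B : Finset A, (a, B) ∈ P.R ∧ ∀ b ∈ B, C ∈ I b}

/-- The parameterized interpretation mapping every atom to `⊥` (i.e. `∅`). -/
def Ibot : A → Set (Set A) := fun _ => ∅


variable {Mg : Type}

/-- The magic-transform shape condition on the rule set `R_M` of the program
`M = (A ⊎ Mg, F, R_M)`: every rule is either (i) a modified rule
`(h, {m} ∪ B)` with `h ∈ A \ F`, `m ∈ Mg` and `(h, B) ∈ R`, or (ii) a magic rule
`(m, B')` with head `m ∈ Mg` and nonempty body `B' ⊆ A ⊎ Mg`. -/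
def MagicShape (P : GroundProgram A)
    (RM : Finset ((A ⊕ Mg) × Finset (A ⊕ Mg))) : Prop :=
  ∀ r ∈ RM,
    (∃ (h : A) (m : Mg) (B : Finset A),
        (h, B) ∈ P.R ∧ h ∉ P.F ∧
        r = (Sum.inl h, insert (Sum.inr m) (B.image Sum.inl))) ∨
    (∃ (m : Mg) (B' : Finset (A ⊕ Mg)), B'.Nonempty ∧ r = (Sum.inr m, B'))

/-- The immediate consequence operator of the magic program `M` for total choice
`C ⊆ F` (facts of `M` are the facts of `P`, embedded via `Sum.inl`). -/
def stepM (RM : Finset ((A ⊕ Mg) × Finset (A ⊕ Mg))) (C : Set A)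
    (I : Set (A ⊕ Mg)) : Set (A ⊕ Mg) :=
  (Sum.inl '' C) ∪ {h | ∃ B : Finset (A ⊕ Mg), (h, B) ∈ RM ∧ ∀ b ∈ B, b ∈ I}

/-- Entailment `C ∪ R_M ⊨ x` in the magic program `M`. -/
def entailsM (RM : Finset ((A ⊕ Mg) × Finset (A ⊕ Mg))) (C : Set A)
    (x : A ⊕ Mg) : Prop :=
  x ∈ ⋃ k : ℕ, (stepM RM C)^[k] ∅

/-- The magic-`Tc_P` operator `Mc_P`: on facts and original derived atoms it behaves
like `Tc_M`, but a magic atom `m` gets formula `⊤` (the set of all total choices) as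
soon as some rule for `m` has all body formulas present (nonempty), and `⊥` otherwise. -/
noncomputable def Mc (P : GroundProgram A)
    (RM : Finset ((A ⊕ Mg) × Finset (A ⊕ Mg)))
    (I : A ⊕ Mg → Set (Set A)) : A ⊕ Mg → Set (Set A) := fun x =>
  match x with
  | Sum.inl a =>
      if a ∈ P.F then {C | C ⊆ P.F ∧ a ∈ C}
      else {C | ∃ B : Finset (A ⊕ Mg), (Sum.inl a, B) ∈ RM ∧ ∀ b ∈ B, C ∈ I b}
  | Sum.inr m =>
      if ∃ B : Finset (A ⊕ Mg), (Sum.inr m, B) ∈ RM ∧ ∀ b ∈ B, (I b).Nonempty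
      then {C | C ⊆ P.F} else ∅

/-- The `Tc_M` operator of the magic program `M` (magic atoms are never facts). -/
noncomputable def TcM (P : GroundProgram A)
    (RM : Finset ((A ⊕ Mg) × Finset (A ⊕ Mg)))
    (I : A ⊕ Mg → Set (Set A)) : A ⊕ Mg → Set (Set A) := fun x =>
  match x with
  | Sum.inl a =>
      if a ∈ P.F then {C | C ⊆ P.F ∧ a ∈ C}
      else {C | ∃ B : Finset (A ⊕ Mg), (Sum.inl a, B) ∈ RM ∧ ∀ b ∈ B, C ∈ I b}
  | Sum.inr m =>
      {C | ∃ B : Finset (A ⊕ Mg), (Sum.inr m, B) ∈ RM ∧ ∀ b ∈ B, C ∈ I b}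

/-- The parameterized interpretation over `A ⊎ Mg` mapping every atom to `⊥`. -/
def IbotM : A ⊕ Mg → Set (Set A) := fun _ => ∅

/-- Stagewise soundness: a model of `τ_a^i` derives `a` within the same number `i` of
steps of the original operator. -/
theorem mem_step_iterate_of_mem_Mc_iterate (P : GroundProgram A)
    (RM : Finset ((A ⊕ Mg) × Finset (A ⊕ Mg))) (hRM : MagicShape P RM) (C : Set A)
    (i : ℕ) : ∀ a : A, C ∈ (Mc P RM)^[i] IbotM (Sum.inl a) → a ∈ (step P C)^[i] ∅ := by
  induction i with
  | zero => intro a h; exact h.elim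
  | succ i ih =>
    intro a h
    rw [Function.iterate_succ_apply'] at h ⊢
    simp only [Mc] at h
    split_ifs at h with ha
    · exact Or.inl h.2
    · obtain ⟨B, hB, hall⟩ := h
      rcases hRM _ hB with ⟨h', m, B₀, hR, -, heq⟩ | ⟨m, B', -, heq⟩
      · obtain ⟨h1, h2⟩ := Prod.mk.inj heq
        obtain rfl := Sum.inl.inj h1
        subst h2
        exact Or.inr ⟨B₀, hR, fun b hb => ih b (hall _
          (Finset.mem_insert_of_mem (Finset.mem_image_of_mem _ hb)))⟩
      · exact absurd (Prod.mk.inj heq).1 Sum.inl_ne_inr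

/-- Lemma 2 (soundness of `Mc_P` on original atoms): for every iteration `i`, every
non-magic atom `a ∈ A`, and every total choice `C ⊆ F`, if `C ∈ τ_a^i` then
`C ∪ R ⊨ a` in the original program `P`. -/
theorem mc_sound_on_original_atoms [Fintype A] [Fintype Mg] (P : GroundProgram A)
    (RM : Finset ((A ⊕ Mg) × Finset (A ⊕ Mg))) (hRM : MagicShape P RM)
    (i : ℕ) (a : A) (C : Set A) (hC : C ⊆ P.F)
    (h : C ∈ (Mc P RM)^[i] IbotM (Sum.inl a)) :
    entails P C a := by
  exact Set.mem_iUnion.2 ⟨i, mem_step_iterate_of_mem_Mc_iterate P RM hRM C i a h⟩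
end

section
/- Probability via weighted model counting at the fixpoint: there exists i₀ ∈ ℕ such that for every iteration i ≥ i₀ and every atom a ∈ A, Pr(a) = WMC(λ_a^i). -/
/-!
Evaluating the parameterized interpretation `Tc_P^i(I_⊥)` at a fixed total choice `C ⊆ F` gives
the ordinary iterate `T_{C∪R}^i(∅)` (`mem_iterate_Tc_iff`). These iterates increase with `i` and
there are finitely many atoms and total choices, so from some `i₀` on they all decide entailment
(`eventually_mem_iterate_iff_entails`). From then on `Pr(a)` and `WMC(λ_a^i)` sum the same
weights over the same total choices.
-/

open Classical

variable {A : Type}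

/-- The weight of a total choice `C ⊆ F`:
`w(C) = (∏_{f ∈ C} π(f)) · (∏_{f ∈ F \ C} (1 − π(f)))`. -/
noncomputable def weight [Fintype A] (P : GroundProgram A) (π : A → ℝ) (C : Set A) : ℝ :=
  (∏ f ∈ C.toFinset, π f) * ∏ f ∈ (P.F \ C).toFinset, (1 - π f)

/-- The query probability `Pr(a) = ∑_{C ⊆ F, C ∪ R ⊨ a} w(C)`. -/
noncomputable def queryProb [Fintype A] (P : GroundProgram A) (π : A → ℝ) (a : A) : ℝ :=
  ∑ C ∈ Finset.univ.filter (fun C : Set A => C ⊆ P.F ∧ entails P C a), weight P π C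

/-- The weighted model count of a (semantically represented) formula `λ`:
`WMC(λ) = ∑_{C ⊆ F, C ∈ λ} w(C)`. -/
noncomputable def WMC [Fintype A] (P : GroundProgram A) (π : A → ℝ) (lam : Set (Set A)) : ℝ :=
  ∑ C ∈ Finset.univ.filter (fun C : Set A => C ⊆ P.F ∧ C ∈ lam), weight P π C

lemma step_mono (P : GroundProgram A) (C : Set A) : Monotone (step P C) := by
  rintro I J hIJ a (ha | ⟨B, hB, hb⟩)
  · exact Or.inl ha
  · exact Or.inr ⟨B, hB, fun b hbB => hIJ (hb b hbB)⟩

lemma iterate_step_mono (P : GroundProgram A) (C : Set A) :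
    Monotone fun k : ℕ => (step P C)^[k] ∅ :=
  (step_mono P C).monotone_iterate_of_le_map (Set.empty_subset _)

/-- The two iterations run in lockstep: a total choice `C` is a model of `λ_a^i` exactly when
`a` has been derived from `C` after `i` applications of the immediate consequence operator. -/
lemma mem_iterate_Tc_iff (P : GroundProgram A) {C : Set A} (hC : C ⊆ P.F) (i : ℕ) (a : A) :
    C ∈ (Tc P)^[i] Ibot a ↔ a ∈ (step P C)^[i] ∅ := by
  induction i generalizing a with
  | zero => simp [Ibot]
  | succ i ih =>
    rw [Function.iterate_succ_apply', Function.iterate_succ_apply']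
    -- A fact heads no rule, so it can only be derived by being chosen.
    by_cases ha : a ∈ P.F
    · have hno : ∀ B : Finset A, (a, B) ∉ P.R := fun B hB => P.head_not_fact _ hB ha
      simp [Tc, step, ha, hC, hno]
    · have haC : a ∉ C := fun h => ha (hC h)
      simp [Tc, step, ha, haC, ih]

/-- With finitely many atoms there are finitely many pairs `(a, C)`, so one bound on the number
of iterations serves for all of them. -/
lemma eventually_mem_iterate_iff_entails [Fintype A] (P : GroundProgram A) :
    ∀ᶠ i : ℕ in Filter.atTop, ∀ (a : A) (C : Set A),
      a ∈ (step P C)^[i] ∅ ↔ entails P C a := by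
  rw [Filter.eventually_all]
  intro a
  rw [Filter.eventually_all]
  intro C
  by_cases h : entails P C a
  · obtain ⟨k, hk⟩ := Set.mem_iUnion.mp h
    filter_upwards [Filter.eventually_ge_atTop k] with i hi
    exact iff_of_true (iterate_step_mono P C hi hk) h
  · exact Filter.Eventually.of_forall fun i =>
      iff_of_false (fun hi => h (Set.mem_iUnion.mpr ⟨i, hi⟩)) h

/-- Probability via weighted model counting at the fixpoint: there is an `i₀` such that
for every `i ≥ i₀` and every atom `a`, `Pr(a) = WMC(λ_a^i)`. -/
theorem prob_eq_wmc_at_fixpoint [Fintype A] (P : GroundProgram A) (π : A → ℝ)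
    (hπ : ∀ f ∈ P.F, 0 ≤ π f ∧ π f ≤ 1) :
    ∃ i₀ : ℕ, ∀ i ≥ i₀, ∀ a : A,
      queryProb P π a = WMC P π ((Tc P)^[i] Ibot a) := by
  obtain ⟨i₀, hi₀⟩ := Filter.eventually_atTop.mp (eventually_mem_iterate_iff_entails P)
  refine ⟨i₀, fun i hi a => Finset.sum_congr (Finset.filter_congr fun C _ => ?_) fun _ _ => rfl⟩
  exact and_congr_right fun hC =>
    (hi₀ i hi a C).symm.trans (mem_iterate_Tc_iff P hC i a).symm
end
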